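/- arXiv:1908.08896 — 4 statements merged into one kernel-verified Lean document; each statement's English description precedes it below -/
import Mathlib

section
/- Let k be any field. The generic 3×3 determinant det₃ cannot be written as a linear combination of 14 or fewer cubes of linear forms; that is, there do not exist scalars c₁,…,c₁₄ ∈ k and linear forms ℓ₁,…,ℓ₁₄ ∈ k[x_{1,1},…,x_{3,3}] with det₃ = c₁ℓ₁³ + ⋯ + c₁₄ℓ₁₄³. Equivalently, the Waring rank of det₃ is at least 15. -/
open MvPolynomial

/-- The generic 3×3 determinant, a cubic form in the 9 variables `x_{i,j}`. -/
noncomputable def det3 (k : Type*) [CommRing k] : MvPolynomial (Fin 3 × Fin 3) k :=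
  Matrix.det (Matrix.of fun i j : Fin 3 => X (i, j))

/-- The linear form with coefficient vector `a`. -/
noncomputable def linForm {k : Type*} [CommRing k] {n : Type*} [Fintype n]
    (a : n → k) : MvPolynomial n k :=
  ∑ i, C (a i) * X i

/-!
Suppose a cubic form `F = ∑ cᵢ ℓᵢ³` on an `n`-dimensional space has a nondegenerate Hessian at every
point where it does not vanish, and is not identically zero. Then the `ℓᵢ` span the dual space, so
`n` of them are the coordinates of some basis. Since the polarization of `F` is trilinear and
nonzero, it is nonzero on some triple of basis vectors, so `F v ≠ 0` for some `v` with at most three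
nonzero coordinates: at least `n - 3` of the `ℓᵢ` vanish at `v`. The Hessian at `v` is a combination
of the squares of the others, and its rank is `n`, so there are at least `n + (n - 3)` forms.
For the determinant, `n = 9` gives `15`: its Hessian at the identity is `tr B tr C - tr (B C)`,
which is nondegenerate when `2 ≠ 0`, and multiplicativity carries this to every invertible matrix.
If `6 = 0`, there is no expression at all: the polarization of a sum of cubes is divisible by `6`,
while that of the determinant takes the value `1`.
-/

/-- The full polarization of a cubic form `f`, a symmetric trilinear map with value `6 * f v` on the
diagonal. As a bilinear form, `cubicPolarization f v` is the Hessian of `f` at `v`.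
The encoding as an alternating sum, for arbitrary functions, avoids division by `6`. -/
def cubicPolarization {V A : Type*} [Add V] [AddCommGroup A] (f : V → A) (u v w : V) : A :=
  f (u + v + w) - f (u + v) - f (u + w) - f (v + w) + f u + f v + f w

/-- Nondegeneracy of the Hessian of a cubic form at every point off its zero locus. -/
def HasNondegenerateHessian {V A : Type*} [AddZeroClass V] [AddCommGroup A] (f : V → A) : Prop :=
  ∀ ⦃v⦄, f v ≠ 0 → ∀ ⦃w⦄, (∀ u, cubicPolarization f v w u = 0) → w = 0

section SumOfCubes

open Module

variable {R V ι κ : Type*} [CommRing R] [AddCommGroup V] [Module R V] [Fintype ι]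

/-- The combination `∑ cᵢ ℓᵢ³` of cubes of linear forms, as a function. -/
def sumOfCubes (c : ι → R) (l : ι → Dual R V) (v : V) : R :=
  ∑ i, c i * l i v ^ 3

theorem sumOfCubes_zero (c : ι → R) (l : ι → Dual R V) : sumOfCubes c l 0 = 0 := by
  simp [sumOfCubes]

theorem cubicPolarization_sumOfCubes (c : ι → R) (l : ι → Dual R V) (u v w : V) :
    cubicPolarization (sumOfCubes c l) u v w = ∑ i, 6 * c i * (l i u * l i v * l i w) := by
  simp only [cubicPolarization, sumOfCubes, map_add, ← Finset.sum_sub_distrib,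
    ← Finset.sum_add_distrib]
  exact Finset.sum_congr rfl fun i _ => by ring

theorem cubicPolarization_sumOfCubes_eq_zero_of_basis {c : ι → R} {l : ι → Dual R V}
    (b : Basis κ R V)
    (h : ∀ p q r, cubicPolarization (sumOfCubes c l) (b p) (b q) (b r) = 0) (u v w : V) :
    cubicPolarization (sumOfCubes c l) u v w = 0 := by
  let T : MultilinearMap R (fun _ : Fin 3 => V) R :=
    ∑ i, (6 * c i) • (MultilinearMap.mkPiAlgebra R (Fin 3) R).compLinearMap fun _ => l i
  have hT (u v w : V) : T ![u, v, w] = cubicPolarization (sumOfCubes c l) u v w := by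
    simp [T, cubicPolarization_sumOfCubes, Fin.prod_univ_three]
  have hT_zero : T = 0 := Basis.ext_multilinear (fun _ => b) fun p => by
    rw [zero_apply, ← h (p 0) (p 1) (p 2), ← hT]
    congr 1
    ext j
    fin_cases j <;> rfl
  rw [← hT, hT_zero, zero_apply]

theorem exists_sumOfCubes_ne_zero_of_cubicPolarization_ne_zero {c : ι → R} {l : ι → Dual R V}
    (b : Basis κ R V) {u v w : V} (h : cubicPolarization (sumOfCubes c l) u v w ≠ 0) :
    ∃ x, sumOfCubes c l x ≠ 0 ∧ (b.repr x).support.card ≤ 3 := by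
  classical
  contrapose! h
  refine cubicPolarization_sumOfCubes_eq_zero_of_basis b (fun p q r => ?_) u v w
  let S := Submodule.span R (b '' {p, q, r})
  have vanish {x : V} (hx : x ∈ S) : sumOfCubes c l x = 0 := by
    by_contra hne
    have hsupport : (b.repr x).support ⊆ {p, q, r} := by
      simpa [← Finset.coe_subset] using b.mem_span_image.mp hx
    exact (h x hne).not_ge ((Finset.card_le_card hsupport).trans Finset.card_le_three)
  have hp : b p ∈ S := Submodule.subset_span ⟨p, by simp, rfl⟩
  have hq : b q ∈ S := Submodule.subset_span ⟨q, by simp, rfl⟩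
  have hr : b r ∈ S := Submodule.subset_span ⟨r, by simp, rfl⟩
  simp only [cubicPolarization, vanish (add_mem (add_mem hp hq) hr), vanish (add_mem hp hq),
    vanish (add_mem hp hr), vanish (add_mem hq hr), vanish hp, vanish hq, vanish hr, sub_zero,
    add_zero]

end SumOfCubes

section Separating

open Module

variable {k V ι : Type*} [Field k] [AddCommGroup V] [Module k V]

theorem finrank_le_ncard_of_separating [Finite ι] {l : ι → Dual k V} {s : Set ι}
    (hl : ∀ v, (∀ i ∈ s, l i v = 0) → v = 0) : finrank k V ≤ s.ncard := by
  have := Fintype.ofFinite s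
  let L : V →ₗ[k] s → k := LinearMap.pi fun i => l i
  have hL : Function.Injective L := LinearMap.ker_eq_bot.mp <| LinearMap.ker_eq_bot'.mpr
    fun v hv => hl v fun i hi => congr_fun hv ⟨i, hi⟩
  calc finrank k V ≤ finrank k (s → k) := LinearMap.finrank_le_finrank_of_injective hL
    _ = s.ncard := by rw [finrank_fintype_fun_eq_card, Fintype.card_eq_nat_card]; rfl

theorem exists_basis_coord_eq_of_separating [FiniteDimensional k V] {l : ι → Dual k V}
    (hl : ∀ v, (∀ i, l i v = 0) → v = 0) :
    ∃ (s : Set ι) (b : Basis s k V), ∀ i, b.coord i = l i := by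
  have hker : ⨅ i, LinearMap.ker (l i) = ⊥ := by
    rw [eq_bot_iff]
    exact fun v hv => hl v (by simpa using hv)
  have hspan : Submodule.span k (Set.range l) = ⊤ := eq_top_iff.mpr fun φ _ =>
    FiniteDimensional.mem_span_of_iInf_ker_le_ker (by simp [hker])
  obtain ⟨s, -, -, hs, hli⟩ :=
    exists_linearIndepOn_extension (linearIndepOn_empty k l) (Set.empty_subset Set.univ)
  let d : Basis s k (Dual k V) := Basis.mk hli (by
    rw [← hspan, Submodule.span_le, ← Set.image_univ, ← Set.image_eq_range]
    exact hs)
  classical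
  have : Finite s := Module.Finite.finite_basis d
  let b : Basis s k V := d.dualBasis.map (evalEquiv k V).symm
  refine ⟨s, b, fun i => b.ext fun j => ?_⟩
  calc b.coord i (b j) = d.dualBasis j (d i) := by
        simp [Finsupp.single_apply, eq_comm]
    _ = d i (b j) := (apply_evalEquiv_symm_apply k V (d i) (d.dualBasis j)).symm
    _ = l i (b j) := LinearMap.congr_fun (Basis.mk_apply hli _ i) (b j)

end Separating

section WaringRank

open Module

variable {k V ι : Type*} [Field k] [AddCommGroup V] [Module k V] [Fintype ι]
  {c : ι → k} {l : ι → Dual k V}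

theorem HasNondegenerateHessian.eq_zero_of_sumOfCubes_ne_zero
    (hess : HasNondegenerateHessian (sumOfCubes c l)) {v w : V} (hv : sumOfCubes c l v ≠ 0)
    (hw : ∀ i, l i v ≠ 0 → l i w = 0) : w = 0 := by
  refine hess hv fun u => ?_
  rw [cubicPolarization_sumOfCubes]
  refine Finset.sum_eq_zero fun i _ => ?_
  by_cases hi : l i v = 0
  · simp [hi]
  · simp [hw i hi]

theorem HasNondegenerateHessian.two_mul_finrank_le_card_add_three [FiniteDimensional k V]
    (hess : HasNondegenerateHessian (sumOfCubes c l)) (hne : sumOfCubes c l ≠ 0) :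
    2 * finrank k V ≤ Fintype.card ι + 3 := by
  obtain ⟨v, hv⟩ := Function.ne_iff.mp hne
  have hv_ne : v ≠ 0 := fun h => hv (h ▸ sumOfCubes_zero c l)
  obtain ⟨u, hu⟩ := not_forall.mp (mt (hess hv (w := v)) hv_ne)
  obtain ⟨s, b, hb⟩ := exists_basis_coord_eq_of_separating fun w hw =>
    hess.eq_zero_of_sumOfCubes_ne_zero hv fun i _ => hw i
  obtain ⟨x, hx, hx_card⟩ := exists_sumOfCubes_ne_zero_of_cubicPolarization_ne_zero b hu
  have hsub : {i | l i x ≠ 0} ⊆ sᶜ ∪ Subtype.val '' ((b.repr x).support : Set s) := by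
    intro i hi
    by_cases his : i ∈ s
    · refine .inr ⟨⟨i, his⟩, ?_, rfl⟩
      simpa [← b.coord_apply, hb] using hi
    · exact .inl his
  have hrank : finrank k V ≤ {i | l i x ≠ 0}.ncard :=
    finrank_le_ncard_of_separating fun w => hess.eq_zero_of_sumOfCubes_ne_zero hx
  have hbasis : finrank k V = s.ncard := finrank_eq_nat_card_basis b
  have hcompl : s.ncard + sᶜ.ncard = Fintype.card ι := by
    rw [Set.ncard_add_ncard_compl, Nat.card_eq_fintype_card]
  have hnonzero : {i | l i x ≠ 0}.ncard ≤ sᶜ.ncard + 3 := calc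
    _ ≤ (sᶜ ∪ Subtype.val '' ((b.repr x).support : Set s)).ncard := Set.ncard_le_ncard hsub
    _ ≤ sᶜ.ncard + (Subtype.val '' ((b.repr x).support : Set s)).ncard := Set.ncard_union_le _ _
    _ ≤ sᶜ.ncard + 3 := by
      gcongr
      exact (Set.ncard_image_le).trans (by rwa [Set.ncard_coe_finset])
  omega

end WaringRank

section Determinant

open Matrix

variable {R : Type*} [CommRing R]

theorem cubicPolarization_det_mul_left (M A B C : Matrix (Fin 3) (Fin 3) R) :
    cubicPolarization det (M * A) (M * B) (M * C) = M.det * cubicPolarization det A B C := by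
  simp only [cubicPolarization, ← mul_add, det_mul]
  ring

theorem cubicPolarization_det_one (B C : Matrix (Fin 3) (Fin 3) R) :
    cubicPolarization det 1 B C = B.trace * C.trace - (B * C).trace := by
  simp only [cubicPolarization, det_fin_three, Fin.isValue, Matrix.add_apply, one_apply_eq, ne_eq,
    Fin.reduceEq, not_false_eq_true, one_apply_ne, zero_add, zero_ne_one, one_ne_zero, det_one,
    trace_fin_three, mul_apply, Fin.sum_univ_three]
  ring

theorem eq_zero_of_trace_mul_trace_eq_trace_mul [NoZeroDivisors R] {n : Type*} [Fintype n]
    (hn : (Fintype.card n : R) ≠ 1) {B : Matrix n n R}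
    (hB : ∀ C : Matrix n n R, B.trace * C.trace = (B * C).trace) : B = 0 := by
  classical
  have htrace : B.trace = 0 := by
    have hone : B.trace * Fintype.card n = B.trace := by simpa using hB 1
    refine (mul_eq_zero.mp ?_).resolve_right (sub_ne_zero.mpr hn)
    linear_combination hone
  ext i j
  simpa [htrace, trace_mul_single] using (hB (single j i 1)).symm

variable {k : Type*} [Field k]

theorem hasNondegenerateHessian_det (h2 : (2 : k) ≠ 0) :
    HasNondegenerateHessian (det : Matrix (Fin 3) (Fin 3) k → k) := by
  intro M hM N hN
  have hcancel : M * (M⁻¹ * N) = N := mul_nonsing_inv_cancel_left _ _ hM.isUnit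
  suffices M⁻¹ * N = 0 by rw [← hcancel, this, mul_zero]
  have hcard : (Fintype.card (Fin 3) : k) ≠ 1 := fun h => h2 <| by
    rw [Fintype.card_fin] at h
    linear_combination h
  refine eq_zero_of_trace_mul_trace_eq_trace_mul hcard fun C => ?_
  rw [← sub_eq_zero, ← cubicPolarization_det_one]
  refine (mul_eq_zero.mp ?_).resolve_left hM
  rw [← cubicPolarization_det_mul_left, mul_one, hcancel, hN]

theorem six_ne_zero_of_det_eq_sumOfCubes [Nontrivial R] {ι : Type*} [Fintype ι] {c : ι → R}
    {l : ι → Module.Dual R (Matrix (Fin 3) (Fin 3) R)} (h : det = sumOfCubes c l) :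
    (6 : R) ≠ 0 := by
  intro h6
  have hone := cubicPolarization_det_one (single 0 0 (1 : R)) (single 1 1 1)
  simp [h, cubicPolarization_sumOfCubes, h6] at hone

theorem fifteen_le_card_of_det_eq_sumOfCubes {ι : Type*} [Fintype ι] {c : ι → k}
    {l : ι → Module.Dual k (Matrix (Fin 3) (Fin 3) k)} (h : det = sumOfCubes c l) :
    15 ≤ Fintype.card ι := by
  have h2 : (2 : k) ≠ 0 := fun h2 =>
    six_ne_zero_of_det_eq_sumOfCubes h (by linear_combination 3 * h2)
  have hne : sumOfCubes c l ≠ 0 := fun h0 => by simpa using congr_fun (h.trans h0) 1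
  have hess : HasNondegenerateHessian (sumOfCubes c l) := h ▸ hasNondegenerateHessian_det h2
  have hrank := hess.two_mul_finrank_le_card_add_three hne
  rw [Module.finrank_matrix, Module.finrank_self, Fintype.card_fin] at hrank
  omega

end Determinant

theorem det3_not_sum_of_14_cubes_general {R ι : Type*} [CommRing R] [Nontrivial R] [Fintype ι]
    {c : ι → R} {a : ι → Fin 3 × Fin 3 → R} (h : det3 R = ∑ i, C (c i) * linForm (a i) ^ 3) :
    15 ≤ Fintype.card ι := by
  obtain ⟨m, hm⟩ := Ideal.exists_maximal R
  let k := R ⧸ m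
  let _ : Field k := Ideal.Quotient.field m
  let l (i : ι) : Module.Dual k (Matrix (Fin 3) (Fin 3) k) :=
    ∑ x, Ideal.Quotient.mk m (a i x) • Matrix.entryLinearMap k k x.1 x.2
  refine fifteen_le_card_of_det_eq_sumOfCubes (c := fun i => Ideal.Quotient.mk m (c i)) (l := l)
    (funext fun M => ?_)
  have heval := congr_arg (eval₂ (Ideal.Quotient.mk m) fun x => M x.1 x.2) h
  simpa [det3, linForm, sumOfCubes, l, Matrix.det_fin_three] using heval

/-- The Waring rank of `det₃` is at least 15: there is no expression of `det₃` as a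
linear combination of 14 (or fewer) cubes of linear forms. -/
theorem det3_not_sum_of_14_cubes (k : Type*) [Field k] :
    ¬ ∃ (c : Fin 14 → k) (a : Fin 14 → (Fin 3 × Fin 3) → k),
        det3 k = ∑ i, C (c i) * linForm (a i) ^ 3 := by
  rintro ⟨c, a, h⟩
  simpa using det3_not_sum_of_14_cubes_general h
end

section
/- Let k be a field of characteristic 0. For every linear form ℓ ∈ k[x_{1,1},…,x_{3,3}], the cubic det₃ − ℓ³ cannot be written as a linear combination of 13 or fewer cubes of linear forms; that is, the Waring rank of det₃ − ℓ³ is at least 14. -/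
open MvPolynomial

/-!
If `det = ∑ cᵢ mᵢ³` with `r` cubes, then the Hessian of `det` at `A` is the bilinear form
`∑ 6 cᵢ mᵢ(A) mᵢ ⊗ mᵢ`. Nine of the `mᵢ` form a basis of the dual space. On the space of those `A`
at which the coefficients of the other `r - 9` terms vanish, whose dimension is at least `18 - r`,
the Hessian is diagonal in that basis, so that its rank is the Hamming weight of the vector of
coefficients. Over an infinite field, the vectors of a `d`-dimensional subspace of `K ^ n` have at
least `d + 1` different weights: a vector of maximal support is nonzero at some coordinate, and the
hyperplane where that coordinate vanishes consists of vectors of smaller weight. But the rank of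
the Hessian at `A` depends only on the rank of `A`, so it takes at most four values. Hence
`19 - r ≤ 4`, that is, `15 ≤ r`, and removing the cube of a linear form lowers the number of cubes
by at most one. A homomorphism to an algebraically closed field supplies the infinite field.
-/

open Module

section LinearAlgebra

variable {K : Type*} [Field K]

theorem exists_le_finrank_add_one_eq_forall_hammingNorm_lt [Infinite K] [DecidableEq K]
    {ι : Type*} [Fintype ι] {W : Submodule K (ι → K)} (hW : W ≠ ⊥) :
    ∃ W' ≤ W, ∃ u ∈ W, finrank K W' + 1 = finrank K W ∧
      ∀ v ∈ W', hammingNorm v < hammingNorm u := by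
  obtain ⟨x, hxW, hx⟩ := W.exists_mem_ne_zero_of_ne_bot hW
  obtain ⟨i, hi⟩ := Function.ne_iff.1 hx
  obtain ⟨u, huW, hu⟩ := Dual.exists_forall_mem_ne_zero_of_forall_exists W
    (fun j : {j // ∃ y ∈ W, y j ≠ 0} ↦ LinearMap.proj j.1) fun j ↦ j.2
  let W' := (LinearMap.ker ((LinearMap.proj i).domRestrict W)).map W.subtype
  have hW' {v : ι → K} : v ∈ W' ↔ v ∈ W ∧ v i = 0 := by
    simp [W', and_comm]
  refine ⟨W', fun v hv ↦ (hW'.1 hv).1, u, huW, ?_, fun v hv ↦ ?_⟩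
  · rw [Submodule.finrank_map_subtype_eq]
    exact Dual.finrank_ker_add_one_of_ne_zero fun h ↦ hi (LinearMap.congr_fun h ⟨x, hxW⟩)
  · obtain ⟨hvW, hvi⟩ := hW'.1 hv
    refine Finset.card_lt_card <| (Finset.ssubset_iff_of_subset fun j hj ↦ ?_).2 ⟨i, ?_, ?_⟩
    · simp only [Finset.mem_filter_univ] at hj ⊢
      exact hu ⟨j, v, hvW, hj⟩
    · simpa using hu ⟨i, x, hxW, hi⟩
    · simpa using hvi

theorem finrank_lt_ncard_hammingNorm_image [Infinite K] [DecidableEq K] {ι : Type*} [Fintype ι]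
    (W : Submodule K (ι → K)) : finrank K W < (hammingNorm '' (W : Set (ι → K))).ncard := by
  have hfin (W : Submodule K (ι → K)) : (hammingNorm '' (W : Set (ι → K))).Finite :=
    (Set.finite_Iic (Fintype.card ι)).subset <| Set.image_subset_iff.2 fun _ _ ↦
      hammingNorm_le_card_fintype
  induction h : finrank K W generalizing W with
  | zero => exact (Set.ncard_pos (hfin W)).2 ⟨_, 0, W.zero_mem, rfl⟩
  | succ d ih =>
    obtain ⟨W', hle, u, huW, hdim, hlt⟩ :=
      exists_le_finrank_add_one_eq_forall_hammingNorm_lt (W := W) (by rintro rfl; simp at h)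
    calc d + 1 < (hammingNorm '' (W' : Set (ι → K))).ncard + 1 := by
          gcongr
          exact ih W' (by omega)
      _ = (insert (hammingNorm u) (hammingNorm '' (W' : Set (ι → K)))).ncard := by
          rw [Set.ncard_insert_of_notMem _ (hfin W')]
          rintro ⟨v, hv, hvu⟩
          exact (hlt v hv).ne hvu
      _ ≤ (hammingNorm '' (W : Set (ι → K))).ncard :=
          Set.ncard_le_ncard (Set.insert_subset ⟨u, huW, rfl⟩ (Set.image_mono hle)) (hfin W)

variable {V ι : Type*} [AddCommGroup V] [Module K V]

theorem pi_surjective_of_linearIndependent [Finite ι] {f : ι → Dual K V}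
    (hf : LinearIndependent K f) : Function.Surjective (LinearMap.pi f) := by
  classical
  have := Fintype.ofFinite ι
  rw [← LinearMap.dualMap_injective_iff, injective_iff_map_eq_zero]
  intro φ hφ
  have hsum : ∑ i, φ (Pi.single i 1) • f i = 0 := by
    ext x
    calc (∑ i, φ (Pi.single i 1) • f i) x = φ (∑ i, f i x • Pi.single i 1) := by
          simp [mul_comm]
      _ = φ (LinearMap.pi f x) := by rw [← pi_eq_sum_univ']; rfl
      _ = 0 := LinearMap.congr_fun hφ x
  ext i
  simpa using Fintype.linearIndependent_iff.1 hf _ hsum i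

theorem finrank_range_sum_smulRight [Fintype ι] {W : Type*} [AddCommGroup W] [Module K W]
    {f : ι → Dual K V} {w : ι → W} (hf : LinearIndependent K f) (hw : LinearIndependent K w) :
    finrank K (LinearMap.range (∑ i, (f i).smulRight (w i))) = Fintype.card ι := by
  have hcomp : ∑ i, (f i).smulRight (w i) =
      Fintype.linearCombination K w ∘ₗ LinearMap.pi f := by
    ext x
    simp [Fintype.linearCombination_apply]
  rw [hcomp, LinearMap.range_comp_of_range_eq_top _
      (LinearMap.range_eq_top.2 (pi_surjective_of_linearIndependent hf)),
    LinearMap.finrank_range_of_inj hw.fintypeLinearCombination_injective,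
    finrank_fintype_fun_eq_card]

theorem finrank_range_sum_smul_smulRight [DecidableEq K] [Fintype ι] {f : ι → Dual K V}
    {v : ι → K} (hf : LinearIndepOn K f {i | v i ≠ 0}) :
    finrank K (LinearMap.range (∑ i, v i • (f i).smulRight (f i))) = hammingNorm v := by
  have hsupp : ∑ i, v i • (f i).smulRight (f i) =
      ∑ i : {i // v i ≠ 0}, (v i • f i).smulRight (f i) := by
    rw [← Finset.sum_filter_of_ne (p := (v · ≠ 0)) fun i _ h hi ↦ h (by simp [hi]),
      ← Finset.sum_subtype_eq_sum_filter, Finset.subtype_univ]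
    exact Fintype.sum_congr _ _ fun i ↦ by ext; simp [mul_assoc]
  have hsmul : LinearIndependent K fun i : {i // v i ≠ 0} ↦ v i • f i :=
    hf.units_smul fun i ↦ Units.mk0 (v i) i.2
  rw [hsupp, finrank_range_sum_smulRight hsmul hf, Fintype.card_subtype, hammingNorm]

theorem exists_linearIndepOn_ncard_eq_finrank [Finite ι] {f : ι → Dual K V}
    (hf : Function.Injective (LinearMap.pi f)) :
    ∃ s : Set ι, LinearIndepOn K f s ∧ s.ncard = finrank K V := by
  have : FiniteDimensional K V := .of_injective _ hf
  have htop : Submodule.span K (Set.range f) = ⊤ := by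
    refine eq_top_iff.2 fun g _ ↦ mem_span_of_iInf_ker_le_ker ?_
    rw [← LinearMap.ker_pi, LinearMap.ker_eq_bot.2 hf]
    exact bot_le
  obtain ⟨s, -, -, hle, hs⟩ := exists_linearIndepOn_extension (linearIndepOn_empty K f)
    (Set.empty_subset Set.univ)
  have := Fintype.ofFinite s
  refine ⟨s, hs, ?_⟩
  have hspan : Submodule.span K (f '' s) = ⊤ := by
    rw [Set.image_univ] at hle
    rwa [eq_top_iff, ← htop, Submodule.span_le]
  rw [← Subspace.dual_finrank_eq, ← finrank_top, ← hspan, Set.image_eq_range,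
    finrank_span_eq_card hs, ← Nat.card_eq_fintype_card, Nat.card_coe_set_eq]

theorem finrank_add_finrank_lt_card_add_ncard_rank [Infinite K] [Fintype ι] {E : Type*}
    [AddCommGroup E] [Module K E] {T : E →ₗ[K] LinearMap.BilinForm K V}
    (hT : Function.Injective T) (hT' : Function.Injective T.flip)
    {f : ι → Dual K E} {g : ι → Dual K V} (h : ∀ x, T x = ∑ i, f i x • (g i).smulRight (g i)) :
    finrank K E + finrank K V <
      Fintype.card ι + (Set.range fun x ↦ finrank K (LinearMap.range (T x))).ncard := by
  classical
  have hf : Function.Injective (LinearMap.pi f) := by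
    refine (injective_iff_map_eq_zero _).2 fun x hx ↦ hT ?_
    have hfx (i) : f i x = 0 := congrFun hx i
    simp [h, hfx]
  have hg : Function.Injective (LinearMap.pi g) := by
    refine (injective_iff_map_eq_zero _).2 fun y hy ↦ hT' ?_
    have hgy (i) : g i y = 0 := congrFun hy i
    ext x
    simp [h, hgy]
  obtain ⟨s, hs, hcard⟩ := exists_linearIndepOn_ncard_eq_finrank hg
  let W := LinearMap.range (LinearMap.pi f) ⊓ Pi.spanSubset K s
  have hdim : finrank K E + finrank K V ≤ Fintype.card ι + finrank K W := by
    rw [← LinearMap.finrank_range_of_inj hf, ← hcard, ← Pi.dim_spanSubset (R := K),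
      ← Submodule.finrank_sup_add_finrank_inf_eq, ← finrank_fintype_fun_eq_card K]
    gcongr
    exact Submodule.finrank_le _
  have hweights : hammingNorm '' (W : Set (ι → K)) ⊆
      Set.range fun x ↦ finrank K (LinearMap.range (T x)) := by
    rintro _ ⟨_, ⟨⟨x, rfl⟩, hx⟩, rfl⟩
    refine ⟨x, ?_⟩
    have hsupp : {i | f i x ≠ 0} ⊆ s := fun i hi ↦ by
      by_contra his
      exact hi (Pi.mem_spanSubset_iff.1 hx i his)
    dsimp only
    rw [h]
    exact finrank_range_sum_smul_smulRight (hs.mono hsupp)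
  have hfin : (Set.range fun x ↦ finrank K (LinearMap.range (T x))).Finite := by
    have : FiniteDimensional K V := .of_injective _ hg
    exact (Set.finite_Iic (finrank K V)).subset <| Set.range_subset_iff.2 fun x ↦ by
      simpa using (T x).finrank_range_le
  have hlt := finrank_lt_ncard_hammingNorm_image W
  have hle := Set.ncard_le_ncard hweights hfin
  omega

end LinearAlgebra

theorem exists_isUnit_mul_mul_eq_of_rank_eq {k n : Type*} [Field k] [Fintype n] [DecidableEq n]
    {A B : Matrix n n k} (h : A.rank = B.rank) :
    ∃ P Q : Matrix n n k, IsUnit P ∧ IsUnit Q ∧ P * A * Q = B := by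
  obtain ⟨V, U, e, hV, hU, hA⟩ := A.exists_rank_normal_form
  obtain ⟨_, _, e', ⟨V', rfl⟩, ⟨U', rfl⟩, hB⟩ := B.exists_rank_normal_form
  generalize B.rank = r at h e' hB
  subst h
  let σ : n ≃ n := e'.trans e.symm
  have hσ : V.submatrix σ id * A * U.submatrix id σ = V' * B * U' := by
    have hsubmatrix : V.submatrix σ id * A * U.submatrix id σ = (V * A * U).submatrix σ σ := rfl
    rw [hsubmatrix, hA, hB]
    ext
    simp [σ]
  refine ⟨(↑V'⁻¹ : Matrix n n k) * V.submatrix σ id, U.submatrix id σ * ↑U'⁻¹,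
    V'⁻¹.isUnit.mul ((Matrix.isUnit_submatrix_equiv σ (.refl n)).2 hV),
    ((Matrix.isUnit_submatrix_equiv (.refl n) σ).2 hU).mul U'⁻¹.isUnit, ?_⟩
  calc (↑V'⁻¹ : Matrix n n k) * V.submatrix σ id * A * (U.submatrix id σ * ↑U'⁻¹)
    _ = (↑V'⁻¹ : Matrix n n k) * (V.submatrix σ id * A * U.submatrix id σ) * ↑U'⁻¹ := by
      simp only [mul_assoc]
    _ = B := by simp [hσ, mul_assoc]

section DetPolar

variable {R : Type*} [CommRing R]

/-- The full polarization of the determinant of `3 × 3` matrices, as a function: the coefficient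
of `x * y * z` in `det (x • A + y • B + z • C)`, in inclusion-exclusion form. -/
def detPolar (A B C : Matrix (Fin 3) (Fin 3) R) : R :=
  (A + B + C).det - (A + B).det - (A + C).det - (B + C).det + A.det + B.det + C.det

theorem detPolar_left_comm (A B C : Matrix (Fin 3) (Fin 3) R) :
    detPolar A B C = detPolar B A C := by
  simp only [detPolar, add_comm B A]
  ring

theorem detPolar_right_comm (A B C : Matrix (Fin 3) (Fin 3) R) :
    detPolar A B C = detPolar A C B := by
  simp only [detPolar, add_comm C B, add_right_comm]
  ring

theorem detPolar_add_right (A B C D : Matrix (Fin 3) (Fin 3) R) :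
    detPolar A B (C + D) = detPolar A B C + detPolar A B D := by
  simp only [detPolar, Matrix.det_fin_three, Matrix.add_apply]
  ring

theorem detPolar_smul_right (r : R) (A B C : Matrix (Fin 3) (Fin 3) R) :
    detPolar A B (r • C) = r • detPolar A B C := by
  simp only [detPolar, Matrix.det_fin_three, Matrix.add_apply, Matrix.smul_apply, smul_eq_mul]
  ring

theorem detPolar_mul_mul (P Q A B C : Matrix (Fin 3) (Fin 3) R) :
    detPolar (P * A * Q) (P * B * Q) (P * C * Q) = P.det * Q.det * detPolar A B C := by
  simp only [detPolar, ← mul_add, ← add_mul, Matrix.det_mul]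
  ring

-- The cyclic indexing modulo 3 makes all nine cofactor signs positive.
theorem detPolar_single_single (A : Matrix (Fin 3) (Fin 3) R) (i j : Fin 3) :
    detPolar A (.single (i + 1) (j + 1) 1) (.single (i + 2) (j + 2) 1) = A i j := by
  fin_cases i <;> fin_cases j <;> simp [detPolar, Matrix.det_fin_three] <;> ring

theorem detPolar_eq_sum_of_det_eq_sum_cubes {ι : Type*} [Fintype ι] {c : ι → R}
    {m : ι → Dual R (Matrix (Fin 3) (Fin 3) R)} (h : ∀ A, A.det = ∑ i, c i * m i A ^ 3)
    (A B C : Matrix (Fin 3) (Fin 3) R) :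
    detPolar A B C = ∑ i, 6 * c i * m i A * m i B * m i C := by
  simp only [detPolar, h, map_add, ← Finset.sum_sub_distrib, ← Finset.sum_add_distrib]
  exact Fintype.sum_congr _ _ fun i ↦ by ring

variable (R) in
/-- The full polarization of the determinant of `3 × 3` matrices, as a trilinear form; at `A` it
is the Hessian of the determinant at `A`. -/
def detPolarTrilin :
    Matrix (Fin 3) (Fin 3) R →ₗ[R] LinearMap.BilinForm R (Matrix (Fin 3) (Fin 3) R) where
  toFun A := LinearMap.mk₂ R (detPolar A)
    (fun B B' C ↦ by simp only [detPolar_right_comm A _ C, detPolar_add_right])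
    (fun r B C ↦ by simp only [detPolar_right_comm A _ C, detPolar_smul_right])
    (detPolar_add_right A) (fun r ↦ detPolar_smul_right r A)
  map_add' A A' := LinearMap.ext₂ fun B C ↦ by
    simp only [LinearMap.add_apply, LinearMap.mk₂_apply, detPolar_left_comm _ B,
      detPolar_right_comm B _ C, detPolar_add_right]
  map_smul' r A := LinearMap.ext₂ fun B C ↦ by
    simp only [LinearMap.smul_apply, LinearMap.mk₂_apply, detPolar_left_comm _ B,
      detPolar_right_comm B _ C, detPolar_smul_right, RingHom.id_apply]

theorem detPolarTrilin_apply (A B C : Matrix (Fin 3) (Fin 3) R) :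
    detPolarTrilin R A B C = detPolar A B C :=
  rfl

theorem detPolarTrilin_flip : (detPolarTrilin R).flip = detPolarTrilin R :=
  LinearMap.ext₂ fun A B ↦ LinearMap.ext fun C ↦ detPolar_left_comm B A C

theorem detPolarTrilin_injective : Function.Injective (detPolarTrilin R) := by
  intro A B h
  ext i j
  rw [← detPolar_single_single A, ← detPolar_single_single B, ← detPolarTrilin_apply, h,
    detPolarTrilin_apply]

variable {K : Type*} [Field K]

theorem finrank_range_detPolarTrilin_mul_mul (P Q : (Matrix (Fin 3) (Fin 3) K)ˣ)
    (A : Matrix (Fin 3) (Fin 3) K) :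
    finrank K (LinearMap.range (detPolarTrilin K (P * A * Q))) =
      finrank K (LinearMap.range (detPolarTrilin K A)) := by
  let e := P.mulLeftLinearEquiv K _ ≪≫ₗ Q.mulRightLinearEquiv K
  have he : e.dualMap.toLinearMap ∘ₗ detPolarTrilin K (P * A * Q) ∘ₗ e.toLinearMap =
      (P.1.det * Q.1.det) • detPolarTrilin K A :=
    LinearMap.ext₂ fun B C ↦ detPolar_mul_mul P.1 Q.1 A B C
  have hdet : P.1.det * Q.1.det ≠ 0 :=
    (((Matrix.isUnit_iff_isUnit_det _).1 P.isUnit).mul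
      ((Matrix.isUnit_iff_isUnit_det _).1 Q.isUnit)).ne_zero
  rw [← LinearMap.range_smul (detPolarTrilin K A) _ hdet, ← he, LinearMap.range_comp,
    LinearEquiv.range_comp]
  exact (e.dualMap.finrank_map_eq _).symm

theorem ncard_range_finrank_range_detPolarTrilin_le :
    (Set.range fun A ↦ finrank K (LinearMap.range (detPolarTrilin K A))).ncard ≤ 4 := by
  have hfactors : (fun A ↦ finrank K (LinearMap.range (detPolarTrilin K A))).FactorsThrough
      Matrix.rank := fun A B h ↦ by
    obtain ⟨_, _, ⟨P, rfl⟩, ⟨Q, rfl⟩, rfl⟩ := exists_isUnit_mul_mul_eq_of_rank_eq h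
    exact (finrank_range_detPolarTrilin_mul_mul P Q A).symm
  obtain ⟨g, hg⟩ := (Function.factorsThrough_iff _).1 hfactors
  rw [hg, Set.range_comp]
  have hrank : Set.range (Matrix.rank : Matrix (Fin 3) (Fin 3) K → ℕ) ⊆ Set.Iic 3 :=
    Set.range_subset_iff.2 Matrix.rank_le_width
  calc (g '' Set.range Matrix.rank).ncard
    _ ≤ (g '' Set.Iic 3).ncard :=
      Set.ncard_le_ncard (Set.image_mono hrank) ((Set.finite_Iic 3).image g)
    _ ≤ (Set.Iic 3).ncard := Set.ncard_image_le (Set.finite_Iic 3)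
    _ = 4 := by simp [Set.ncard_eq_toFinset_card']

theorem fourteen_lt_card_of_det_eq_sum_cubes [Infinite K] {ι : Type*} [Fintype ι] {c : ι → K}
    {m : ι → Dual K (Matrix (Fin 3) (Fin 3) K)} (h : ∀ A, A.det = ∑ i, c i * m i A ^ 3) :
    14 < Fintype.card ι := by
  have hdiag (A : Matrix (Fin 3) (Fin 3) K) : detPolarTrilin K A =
      ∑ i, ((6 * c i) • m i) A • (m i).smulRight (m i) := LinearMap.ext₂ fun B C ↦ by
    simp [detPolarTrilin_apply, detPolar_eq_sum_of_det_eq_sum_cubes h, mul_assoc]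
  have hlt := finrank_add_finrank_lt_card_add_ncard_rank detPolarTrilin_injective
    (by rw [detPolarTrilin_flip]; exact detPolarTrilin_injective) hdiag
  have hle := ncard_range_finrank_range_detPolarTrilin_le (K := K)
  have hnine : finrank K (Matrix (Fin 3) (Fin 3) K) = 9 := by simp [finrank_matrix]
  omega

end DetPolar

section Polynomial

variable {R S : Type*} [CommRing R] [CommRing S] (φ : R →+* S)

theorem eval₂Hom_linForm {n : Type*} [Fintype n] (a : n → R) (x : n → S) :
    eval₂Hom φ x (linForm a) = (φ ∘ a) ⬝ᵥ x := by
  simp [linForm, dotProduct]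

theorem eval₂Hom_det3 (A : Matrix (Fin 3) (Fin 3) S) :
    eval₂Hom φ (Function.uncurry A) (det3 R) = A.det := by
  rw [det3, RingHom.map_det]
  congr 1
  ext i j
  simp [Function.uncurry]

theorem fourteen_lt_card_of_det3_eq_sum_cubes [Nontrivial R] {ι : Type*} [Fintype ι] {c : ι → R}
    {a : ι → Fin 3 × Fin 3 → R} (h : det3 R = ∑ i, C (c i) * linForm (a i) ^ 3) :
    14 < Fintype.card ι := by
  obtain ⟨I, hI⟩ := Ideal.exists_maximal R
  let _ := Ideal.Quotient.field I
  let K := AlgebraicClosure (R ⧸ I)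
  let φ : R →+* K := (algebraMap (R ⧸ I) K).comp (Ideal.Quotient.mk I)
  let toDual (v : Fin 3 × Fin 3 → R) : Dual K (Matrix (Fin 3) (Fin 3) K) :=
    dotProductEquiv K _ (φ ∘ v) ∘ₗ (LinearEquiv.curry K K (Fin 3) (Fin 3)).symm.toLinearMap
  refine fourteen_lt_card_of_det_eq_sum_cubes (c := φ ∘ c) (m := fun i ↦ toDual (a i)) fun A ↦ ?_
  have hA := congrArg (eval₂Hom φ (Function.uncurry A)) h
  simp only [map_sum, map_mul, map_pow, eval₂Hom_det3, eval₂Hom_linForm, eval₂Hom_C] at hA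
  exact hA

end Polynomial

theorem det3_sub_cube_not_sum_of_13_cubes_general {R ι : Type*} [CommRing R] [Nontrivial R]
    [Fintype ι] (hι : Fintype.card ι ≤ 13) (b : Fin 3 × Fin 3 → R) :
    ¬ ∃ (c : ι → R) (a : ι → Fin 3 × Fin 3 → R),
        det3 R - linForm b ^ 3 = ∑ i, C (c i) * linForm (a i) ^ 3 := by
  rintro ⟨c, a, h⟩
  have hdet : det3 R = ∑ i : Option ι, C (i.elim 1 c) * linForm (i.elim b a) ^ 3 := by
    simpa [Fintype.sum_option, sub_eq_iff_eq_add'] using h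
  have hcard := fourteen_lt_card_of_det3_eq_sum_cubes hdet
  rw [Fintype.card_option] at hcard
  omega

/-- Over a field of characteristic 0, for every linear form `ℓ` the Waring rank of
`det₃ - ℓ³` is at least 14: it cannot be written as a linear combination of 13 (or fewer)
cubes of linear forms. -/
theorem det3_sub_cube_not_sum_of_13_cubes (k : Type*) [Field k] [CharZero k]
    (b : (Fin 3 × Fin 3) → k) :
    ¬ ∃ (c : Fin 13 → k) (a : Fin 13 → (Fin 3 × Fin 3) → k),
        det3 k - linForm b ^ 3 = ∑ i, C (c i) * linForm (a i) ^ 3 :=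
  det3_sub_cube_not_sum_of_13_cubes_general (by simp) b
end

section
/- Let k be a field of characteristic 0. The generic 3×3 permanent per₃ cannot be written as a linear combination of 13 or fewer cubes of linear forms; that is, the Waring rank of per₃ is at least 14. -/
open MvPolynomial

/-- The generic 3×3 permanent, a cubic form in the 9 variables `x_{i,j}`. -/
noncomputable def per3 (k : Type*) [CommRing k] : MvPolynomial (Fin 3 × Fin 3) k :=
  ∑ σ : Equiv.Perm (Fin 3), ∏ i : Fin 3, X (i, σ i)

/-!
Suppose `per₃ = ∑ cᵢ ℓᵢ³` with `n` cubes over an infinite field `k`. In the algebra `kⁿ`, let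
`x_p` be the vector of coefficients of the variable `p` in the `ℓᵢ`, and let `ε f = ∑ 6 cᵢ fᵢ`. By
polarization, `ε (x_p x_q x_r)` is the symmetric trilinear form of `per₃`.

Let `E` be the span of all `x_p`, `R` the span of those in a fixed row, `K` the subspace of `R E`
that pairs to zero with `E` under `ε`, and `κ = dim K`. Pairing with the `x_p` maps `kⁿ` onto `k⁹`
and `R E` onto a space of dimension at least `6`, so `κ + 9 ≤ n` and `κ + 6 ≤ dim R E`. An element
`t` of `R` of maximal support is not a zero divisor on multiples of `R`, so
`dim R E = dim t R E ≤ dim R R E`. The trilinear form gives `R R ⊆ K`, and `R R E` is contained in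
`R K` plus the span of two monomials. Finally, splitting `K = t R ⊕ Q` gives
`R K = t (R R) + R Q`, so `dim R K ≤ κ + 3 (κ - 3)`. Altogether `κ + 6 ≤ 4 κ - 9 + 2`, whence
`κ ≥ 5` and `n ≥ 14`. Base change to the algebraic closure of a residue field reduces any
nontrivial coefficient ring to this case.
-/

open Module (finrank)
open Submodule (span)

theorem finrank_mul_le_finrank_mul_finrank {k A : Type*} [Field k] [Ring A] [Algebra k A]
    (M N : Submodule k A) [FiniteDimensional k M] [FiniteDimensional k N] :
    finrank k ↥(M * N) ≤ finrank k M * finrank k N := by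
  rw [← Submodule.mulMap_range, ← Module.finrank_tensorProduct]
  exact LinearMap.finrank_range_le _

theorem finrank_span_singleton_mul {k A : Type*} [Field k] [Ring A] [Algebra k A] {t : A}
    {M : Submodule k A} (ht : ∀ f ∈ M, t * f = 0 → f = 0) :
    finrank k ↥(span k {t} * M) = finrank k M := by
  have hinj : Function.Injective ((LinearMap.mulLeft k t).domRestrict M) :=
    (injective_iff_map_eq_zero _).2 fun f hf => Subtype.ext (ht f f.2 hf)
  have hmap : span k {t} * M = M.map (LinearMap.mulLeft k t) := by
    ext f
    simp [Submodule.mem_span_singleton_mul]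
  rw [hmap, ← LinearMap.range_domRestrict, LinearMap.finrank_range_of_inj hinj]

theorem finrank_mul_add_sq_le {k A : Type*} [Field k] [CommRing A] [Algebra k A]
    [FiniteDimensional k A] {V K : Submodule k A} {t : A} (hVV : V * V ≤ K) (htV : t ∈ V)
    (ht : ∀ f ∈ V, t * f = 0 → f = 0) :
    finrank k ↥(V * K) + finrank k V ^ 2 ≤ (finrank k V + 1) * finrank k K := by
  have htVV : span k {t} * V ≤ V * V := mul_le_mul' (by simpa using htV) le_rfl
  obtain ⟨Q, hdisj, hsup⟩ := IsModularLattice.exists_disjoint_and_sup_eq (htVV.trans hVV)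
  have hQ : finrank k K = finrank k V + finrank k Q := by
    rw [← finrank_span_singleton_mul ht, ← hsup, ← Submodule.finrank_sup_add_finrank_inf_eq,
      hdisj.eq_bot, finrank_bot, add_zero]
  have htVV_le : finrank k ↥(span k {t} * (V * V)) ≤ finrank k K :=
    calc finrank k ↥(span k {t} * (V * V)) ≤ finrank k (span k {t}) * finrank k ↥(V * V) :=
          finrank_mul_le_finrank_mul_finrank _ _
      _ ≤ 1 * finrank k K :=
          Nat.mul_le_mul ((finrank_span_le_card {t}).trans_eq (by simp))
            (Submodule.finrank_mono hVV)
      _ = finrank k K := one_mul _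
  have hVK : V * K = span k {t} * (V * V) ⊔ V * Q := by
    rw [← hsup, Submodule.mul_sup, mul_left_comm]
  calc finrank k ↥(V * K) + finrank k V ^ 2
      ≤ finrank k K + finrank k V * finrank k Q + finrank k V ^ 2 := by
        rw [hVK]
        gcongr
        exact (Submodule.finrank_add_le_finrank_add_finrank _ _).trans
          (Nat.add_le_add htVV_le (finrank_mul_le_finrank_mul_finrank _ _))
    _ = (finrank k V + 1) * finrank k K := by rw [hQ]; ring

section FunctionAlgebra

variable {k ι : Type*} [Field k] [Infinite k] [Finite ι]

theorem exists_mem_forall_support_subset (V : Submodule k (ι → k)) :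
    ∃ t ∈ V, ∀ f ∈ V, f.support ⊆ t.support := by
  obtain ⟨t, htV, ht⟩ := Module.Dual.exists_forall_mem_ne_zero_of_forall_exists V
    (fun i : {i // ∃ f ∈ V, f i ≠ 0} => LinearMap.proj i.1) fun i => i.2
  exact ⟨t, htV, fun f hf i hi => ht ⟨i, f, hf, hi⟩⟩

theorem exists_mem_regular_on_mul (V : Submodule k (ι → k)) :
    ∃ t ∈ V, ∀ M, ∀ f ∈ V * M, t * f = 0 → f = 0 := by
  obtain ⟨t, htV, ht⟩ := exists_mem_forall_support_subset V
  refine ⟨t, htV, fun M f hf htf => funext fun i => ?_⟩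
  by_contra hfi
  have hti : t i = 0 := (mul_eq_zero.1 (congrFun htf i)).resolve_right hfi
  have hV : ∀ v ∈ V, v i = 0 := fun v hv => by
    by_contra hvi
    exact ht v hv hvi hti
  have hle : V * M ≤ LinearMap.ker (LinearMap.proj i) :=
    Submodule.mul_le.2 fun v hv m _ => by simp [hV v hv]
  exact hfi (hle hf)

end FunctionAlgebra

theorem finrank_inf_ker_add_card_le {k A P : Type*} [Field k] [AddCommGroup A] [Module k A]
    [DecidableEq P] {φ : A →ₗ[k] P → k} {y : P → A} (h : ∀ p, φ (y p) = Pi.single p 1)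
    {s : Finset P} {W : Submodule k A} [FiniteDimensional k W] (hW : ∀ p ∈ s, y p ∈ W) :
    finrank k ↥(W ⊓ φ.ker) + s.card ≤ finrank k W := by
  have hind : LinearIndependent k fun p : s => φ (y p) := by
    simp only [h]
    exact (Pi.linearIndependent_single_one P k).comp _ Subtype.val_injective
  have hspan : span k (Set.range fun p : s => φ (y p)) ≤ W.map φ :=
    Submodule.span_le.2 (Set.range_subset_iff.2 fun p => ⟨y p, hW p p.2, rfl⟩)
  have hcard := Submodule.finrank_mono hspan
  rw [finrank_span_eq_card hind, Fintype.card_coe] at hcard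
  have hker : finrank k ↥(W ⊓ φ.ker) = finrank k (φ.domRestrict W).ker := by
    rw [LinearMap.ker_domRestrict, ← Submodule.map_comap_subtype, Submodule.finrank_map_subtype_eq]
  have hrank := (φ.domRestrict W).finrank_range_add_finrank_ker
  rw [LinearMap.range_domRestrict] at hrank
  omega

section ApolarPairing

variable {k A P : Type*} [Field k] [CommRing A] [Algebra k A]

/-- The pairing `f ↦ (p ↦ ε (f xₚ))` of an algebra with a family `x` of its elements. -/
def pairing (ε : A →ₗ[k] k) (x : P → A) : A →ₗ[k] P → k :=
  LinearMap.pi fun p => ε ∘ₗ LinearMap.mulRight k (x p)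

@[simp]
theorem pairing_apply (ε : A →ₗ[k] k) (x : P → A) (f : A) (p : P) :
    pairing ε x f p = ε (f * x p) :=
  rfl

theorem linearIndependent_of_pairing_eq_single [DecidableEq P] {ε : A →ₗ[k] k} {x y : P → A}
    (h : ∀ p, pairing ε x (y p) = Pi.single p 1) : LinearIndependent k x := by
  have hswap : pairing ε y ∘ x = fun p => Pi.single p 1 := by
    ext p q
    simpa [mul_comm, Pi.single_apply, eq_comm] using congrFun (h q) p
  exact LinearIndependent.of_comp (pairing ε y) (hswap ▸ Pi.linearIndependent_single_one P k)

end ApolarPairing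

section PermanentalFunctional

variable {k A : Type*} [Field k] [CommRing A] [Algebra k A]

/-- `ε (xₚ x_q xᵣ)` is the coefficient at `(p, q, r)` of the trilinear form polarizing `per₃`: it
is `1` if the cells `p`, `q`, `r` lie in distinct rows and columns and `0` otherwise. Rows and
columns are elements of `Fin 3 = ℤ/3`, so the cell completing `p` and `q` is `-(p + q)`. -/
def IsPermanental (ε : A →ₗ[k] k) (x : Fin 3 × Fin 3 → A) : Prop :=
  ∀ p q r, ε (x p * x q * x r) = if p.1 ≠ q.1 ∧ p.2 ≠ q.2 ∧ p + q + r = 0 then 1 else 0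

/-- The submodule spanned by the entries `x (i, j)` in row `i`. -/
def rowSpan (k : Type*) {A : Type*} [Field k] [CommRing A] [Algebra k A]
    (x : Fin 3 × Fin 3 → A) (i : Fin 3) : Submodule k A :=
  span k (Set.range fun j => x (i, j))

/-- One of the two monomials in the permanent of the minor complementary to `p`. -/
def complementaryMonomial (x : Fin 3 × Fin 3 → A) (p : Fin 3 × Fin 3) : A :=
  x (p + (1, 1)) * x (p + (2, 2))

/-- The linear combinations of products of an entry of row `i` with an arbitrary entry that pair to
zero with every entry: the part of the quadrics apolar to `per₃` coming from row `i`. -/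
def apolarQuadrics (ε : A →ₗ[k] k) (x : Fin 3 × Fin 3 → A) (i : Fin 3) : Submodule k A :=
  rowSpan k x i * span k (Set.range x) ⊓ (pairing ε x).ker

theorem entry_mem_rowSpan {x : Fin 3 × Fin 3 → A} (i j : Fin 3) : x (i, j) ∈ rowSpan k x i :=
  Submodule.subset_span ⟨j, rfl⟩

theorem entry_mul_entry_mem {x : Fin 3 × Fin 3 → A} (i j : Fin 3) (p : Fin 3 × Fin 3) :
    x (i, j) * x p ∈ rowSpan k x i * span k (Set.range x) :=
  Submodule.mul_mem_mul (entry_mem_rowSpan i j) (Submodule.subset_span ⟨p, rfl⟩)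

namespace IsPermanental

variable {ε : A →ₗ[k] k} {x : Fin 3 × Fin 3 → A} (h : IsPermanental ε x)
include h

theorem pairing_complementaryMonomial (p : Fin 3 × Fin 3) :
    pairing ε x (complementaryMonomial x p) = Pi.single p 1 := by
  ext q
  have hiff : ((p + (1, 1)).1 ≠ (p + (2, 2)).1 ∧ (p + (1, 1)).2 ≠ (p + (2, 2)).2 ∧
      p + (1, 1) + (p + (2, 2)) + q = 0) ↔ q = p := by
    revert p q; decide
  rw [pairing_apply, complementaryMonomial, h, Pi.single_apply]
  exact if_congr hiff rfl rfl

theorem finrank_rowSpan (i : Fin 3) : finrank k (rowSpan k x i) = 3 := by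
  have hind := linearIndependent_of_pairing_eq_single h.pairing_complementaryMonomial
  exact finrank_span_eq_card (hind.comp (Prod.mk i) (Prod.mk_right_injective i))

theorem finrank_ker_add_nine_le [FiniteDimensional k A] :
    finrank k (pairing ε x).ker + 9 ≤ finrank k A := by
  have hle := finrank_inf_ker_add_card_le (s := Finset.univ) (W := ⊤)
    h.pairing_complementaryMonomial fun _ _ => Submodule.mem_top
  rwa [top_inf_eq, finrank_top] at hle

theorem finrank_apolarQuadrics_add_six_le [FiniteDimensional k A] (i : Fin 3) :
    finrank k (apolarQuadrics ε x i) + 6 ≤ finrank k ↥(rowSpan k x i * span k (Set.range x)) := by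
  have hcard : (Finset.univ.filter fun p : Fin 3 × Fin 3 => p.1 ≠ i).card = 6 := by
    revert i; decide
  rw [← hcard]
  refine finrank_inf_ker_add_card_le h.pairing_complementaryMonomial fun p hp => ?_
  have hrow : p.1 + 1 = i ∨ p.1 + 2 = i := by
    simp only [Finset.mem_filter, Finset.mem_univ, true_and] at hp
    revert p i; decide
  rcases hrow with rfl | rfl
  · exact entry_mul_entry_mem (p.1 + 1) (p.2 + 1) (p + (2, 2))
  · rw [complementaryMonomial, mul_comm (x _)]
    exact entry_mul_entry_mem (p.1 + 2) (p.2 + 2) (p + (1, 1))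

theorem mul_same_row_mem_apolarQuadrics (i a b : Fin 3) :
    x (i, a) * x (i, b) ∈ apolarQuadrics ε x i :=
  ⟨entry_mul_entry_mem _ _ _, by ext q; simp [h _ _ q]⟩

theorem mul_same_col_mem_apolarQuadrics (i l b : Fin 3) :
    x (i, b) * x (l, b) ∈ apolarQuadrics ε x i :=
  ⟨entry_mul_entry_mem _ _ _, by ext q; simp [h _ _ q]⟩

theorem exchange_mem_apolarQuadrics (i l b c : Fin 3) :
    x (i, b) * x (l, c) - x (i, c) * x (l, b) ∈ apolarQuadrics ε x i :=
  ⟨sub_mem (entry_mul_entry_mem _ _ _) (entry_mul_entry_mem _ _ _), by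
    ext q; simp [sub_mul, h _ _ q, add_comm b c, ne_comm (a := b)]⟩

theorem rowSpan_mul_rowSpan_le (i : Fin 3) :
    rowSpan k x i * rowSpan k x i ≤ apolarQuadrics ε x i := by
  rw [rowSpan, Submodule.span_mul_span, Submodule.span_le]
  rintro _ ⟨_, ⟨a, rfl⟩, _, ⟨b, rfl⟩, rfl⟩
  exact h.mul_same_row_mem_apolarQuadrics i a b

/-- Modulo `rowSpan * apolarQuadrics`, the monomial is symmetric in `a`, `b`, `c` and vanishes
when two of them agree. -/
theorem mul_same_row_mul_mem (i l a b c : Fin 3) :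
    x (i, a) * x (i, b) * x (l, c) ∈
      rowSpan k x i * apolarQuadrics ε x i ⊔ span k {x (i, 0) * x (i, 1) * x (l, 2)} := by
  set M := rowSpan k x i * apolarQuadrics ε x i ⊔ span k {x (i, 0) * x (i, 1) * x (l, 2)}
  have hmul {a f} (hf : f ∈ apolarQuadrics ε x i) : x (i, a) * f ∈ M :=
    le_sup_left (a := rowSpan k x i * _) (Submodule.mul_mem_mul (entry_mem_rowSpan i a) hf)
  have hrepeat (a b) : x (i, a) * x (i, b) * x (l, b) ∈ M := by
    rw [mul_assoc]
    exact hmul (h.mul_same_col_mem_apolarQuadrics i l b)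
  have hcomm (a b c) : x (i, a) * x (i, b) * x (l, c) = x (i, b) * x (i, a) * x (l, c) := by
    rw [mul_comm (x (i, a))]
  have hexchange (a b c) :
      x (i, a) * x (i, b) * x (l, c) ∈ M ↔ x (i, a) * x (i, c) * x (l, b) ∈ M := by
    have hsub : x (i, a) * x (i, b) * x (l, c) - x (i, a) * x (i, c) * x (l, b) ∈ M := by
      rw [mul_assoc, mul_assoc, ← mul_sub]
      exact hmul (h.exchange_mem_apolarQuadrics i l b c)
    exact ⟨fun hb => by simpa using sub_mem hb hsub, fun hc => by simpa using add_mem hsub hc⟩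
  have htransversal : x (i, 0) * x (i, 1) * x (l, 2) ∈ M :=
    le_sup_right (a := rowSpan k x i * _) (Submodule.mem_span_singleton_self _)
  fin_cases a <;> fin_cases b <;> fin_cases c <;> grind

theorem rowSpan_mul_rowSpan_mul_span_le (i : Fin 3) :
    rowSpan k x i * rowSpan k x i * span k (Set.range x) ≤
      rowSpan k x i * apolarQuadrics ε x i ⊔
        span k (Set.range fun l : {l // l ≠ i} => x (i, 0) * x (i, 1) * x (l, 2)) := by
  rw [rowSpan, Submodule.span_mul_span, Submodule.span_mul_span, Submodule.span_le]
  rintro _ ⟨_, ⟨_, ⟨a, rfl⟩, _, ⟨b, rfl⟩, rfl⟩, _, ⟨⟨l, c⟩, rfl⟩, rfl⟩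
  rcases eq_or_ne l i with rfl | hl
  · refine Submodule.mem_sup_left ?_
    simp only [mul_assoc]
    exact Submodule.mul_mem_mul (entry_mem_rowSpan l a) (h.mul_same_row_mem_apolarQuadrics l b c)
  · have hspan : span k {x (i, 0) * x (i, 1) * x (l, 2)} ≤
        span k (Set.range fun l : {l // l ≠ i} => x (i, 0) * x (i, 1) * x (l, 2)) :=
      Submodule.span_mono (Set.singleton_subset_iff.2 ⟨⟨l, hl⟩, rfl⟩)
    exact sup_le_sup_left hspan _ (h.mul_same_row_mul_mem i l a b c)

theorem finrank_rowSpan_mul_rowSpan_mul_span_le [FiniteDimensional k A] (i : Fin 3) :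
    finrank k ↥(rowSpan k x i * rowSpan k x i * span k (Set.range x)) ≤
      finrank k ↥(rowSpan k x i * apolarQuadrics ε x i) + 2 := by
  have hcard : Fintype.card {l // l ≠ i} = 2 := by simp [Fintype.card_subtype_compl]
  refine (Submodule.finrank_mono (h.rowSpan_mul_rowSpan_mul_span_le i)).trans <|
    (Submodule.finrank_add_le_finrank_add_finrank _ _).trans ?_
  gcongr
  exact (finrank_range_le_card _).trans_eq hcard

end IsPermanental

end PermanentalFunctional

theorem IsPermanental.fourteen_le_card {k ι : Type*} [Field k] [Infinite k] [Fintype ι]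
    {ε : (ι → k) →ₗ[k] k} {x : Fin 3 × Fin 3 → ι → k} (h : IsPermanental ε x) :
    14 ≤ Fintype.card ι := by
  set R := rowSpan k x 0
  set E := span k (Set.range x)
  set K := apolarQuadrics ε x 0
  have hRE : R ≤ R * 1 := (mul_one R).ge
  obtain ⟨t, htR, ht⟩ := exists_mem_regular_on_mul R
  have hK_add_nine : finrank k K + 9 ≤ Fintype.card ι := by
    rw [← Module.finrank_fintype_fun_eq_card k]
    have hle : finrank k K ≤ finrank k (pairing ε x).ker := Submodule.finrank_mono inf_le_right
    have := h.finrank_ker_add_nine_le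
    omega
  have hK_add_six : finrank k K + 6 ≤ finrank k ↥(R * E) :=
    h.finrank_apolarQuadrics_add_six_le 0
  have hRE_le : finrank k ↥(R * E) ≤ finrank k ↥(R * R * E) := by
    rw [← finrank_span_singleton_mul (ht E), mul_assoc]
    exact Submodule.finrank_mono (mul_le_mul' (by simpa using htR) le_rfl)
  have hRRE_le : finrank k ↥(R * R * E) ≤ finrank k ↥(R * K) + 2 :=
    h.finrank_rowSpan_mul_rowSpan_mul_span_le 0
  have hRK : finrank k ↥(R * K) + 3 ^ 2 ≤ (3 + 1) * finrank k K := by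
    rw [← h.finrank_rowSpan 0]
    exact finrank_mul_add_sq_le (h.rowSpan_mul_rowSpan_le 0) htR fun f hf => ht 1 f (hRE hf)
  omega

section Polarization

/-- The full polarization of a function of degree three. -/
def polarization {V R : Type*} [Add V] [CommRing R] (f : V → R) (x y z : V) : R :=
  f (x + y + z) - f (x + y) - f (x + z) - f (y + z) + f x + f y + f z

variable {R : Type*} [CommRing R]

theorem eval_per3 (x : Fin 3 × Fin 3 → R) :
    eval x (per3 R) =
      x (0, 0) * (x (1, 1) * x (2, 2) + x (1, 2) * x (2, 1)) +
      x (0, 1) * (x (1, 0) * x (2, 2) + x (1, 2) * x (2, 0)) +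
      x (0, 2) * (x (1, 0) * x (2, 1) + x (1, 1) * x (2, 0)) := by
  have hperm : (Finset.univ : Finset (Equiv.Perm (Fin 3))) =
      {1, Equiv.swap 0 1, Equiv.swap 0 2, Equiv.swap 1 2,
        Equiv.swap 0 1 * Equiv.swap 1 2, Equiv.swap 1 2 * Equiv.swap 0 1} := by
    decide
  rw [per3, hperm]
  repeat rw [Finset.sum_insert (by decide)]
  rw [Finset.sum_singleton]
  simp only [Fin.prod_univ_three, Equiv.Perm.coe_one, Equiv.Perm.coe_mul, Function.comp_apply,
    Equiv.swap_apply_def, id_eq, Fin.reduceEq, zero_ne_one, one_ne_zero, ↓reduceIte, map_add,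
    map_mul, eval_X]
  ring

theorem polarization_eval_per3 (x y z : Fin 3 × Fin 3 → R) :
    polarization (fun u => eval u (per3 R)) x y z =
      ∑ p, ∑ q, if p.1 ≠ q.1 ∧ p.2 ≠ q.2 then x p * y q * z (-(p + q)) else 0 := by
  have h₁ : (-1 : Fin 3) = 2 := rfl
  have h₂ : (-2 : Fin 3) = 1 := rfl
  have h₁₂ : (1 + 2 : Fin 3) = 0 := rfl
  have h₂₁ : (2 + 1 : Fin 3) = 0 := rfl
  simp only [polarization, eval_per3, Fintype.sum_prod_type, Fin.sum_univ_three, Pi.add_apply,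
    Prod.mk_add_mk, Prod.neg_mk, add_zero, zero_add, neg_zero, h₁, h₂, h₁₂, h₂₁, ne_eq,
    Fin.reduceEq, zero_ne_one, one_ne_zero, not_true_eq_false, not_false_eq_true, and_true,
    and_false, ↓reduceIte]
  ring

theorem polarization_eval_per3_single (p q r : Fin 3 × Fin 3) :
    polarization (fun u => eval u (per3 R)) (Pi.single p 1) (Pi.single q 1) (Pi.single r 1) =
      if p.1 ≠ q.1 ∧ p.2 ≠ q.2 ∧ p + q + r = 0 then 1 else 0 := by
  rw [polarization_eval_per3, Fintype.sum_eq_single p, Fintype.sum_eq_single q]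
  · simp [Pi.single_apply, ← neg_eq_iff_add_eq_zero, ite_and]
  · intro q' hq
    simp [hq]
  · intro p' hp
    simp [hp]

theorem eval_linForm {n : Type*} [Fintype n] (a x : n → R) : eval x (linForm a) = a ⬝ᵥ x := by
  simp [linForm, dotProduct]

theorem polarization_eval_sum_cubes {n ι : Type*} [Fintype n] [Fintype ι]
    (c : ι → R) (a : ι → n → R) (x y z : n → R) :
    polarization (fun u => eval u (∑ i, C (c i) * linForm (a i) ^ 3)) x y z =
      ∑ i, 6 * c i * ((a i ⬝ᵥ x) * (a i ⬝ᵥ y) * (a i ⬝ᵥ z)) := by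
  simp only [polarization, map_sum, map_mul, map_pow, eval_C, eval_linForm, dotProduct_add,
    ← Finset.sum_sub_distrib, ← Finset.sum_add_distrib]
  exact Finset.sum_congr rfl fun i _ => by ring

theorem isPermanental_of_per3_eq_sum {k ι : Type*} [Field k] [Fintype ι] {c : ι → k}
    {a : ι → Fin 3 × Fin 3 → k} (h : per3 k = ∑ i, C (c i) * linForm (a i) ^ 3) :
    IsPermanental (∑ i, (6 * c i) • LinearMap.proj i : (ι → k) →ₗ[k] k) fun p i => a i p := by
  intro p q r
  rw [← polarization_eval_per3_single, h, polarization_eval_sum_cubes]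
  simp

end Polarization

section BaseChange

variable {R S : Type*} [CommRing R] [CommRing S] (f : R →+* S)

theorem map_per3 : map f (per3 R) = per3 S := by
  simp [per3]

theorem map_linForm {n : Type*} [Fintype n] (a : n → R) :
    map f (linForm a) = linForm (f ∘ a) := by
  simp [linForm]

end BaseChange

theorem per3_not_sum_of_13_cubes_general {R ι : Type*} [CommRing R] [Nontrivial R] [Fintype ι]
    {c : ι → R} {a : ι → Fin 3 × Fin 3 → R}
    (h : per3 R = ∑ i, C (c i) * linForm (a i) ^ 3) : 14 ≤ Fintype.card ι := by
  obtain ⟨m, hm⟩ := Ideal.exists_maximal R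
  let := Ideal.Quotient.field m
  let f : R →+* AlgebraicClosure (R ⧸ m) := (algebraMap (R ⧸ m) _).comp (Ideal.Quotient.mk m)
  have hmap := congrArg (map f) h
  simp only [map_per3, map_sum, map_mul, map_pow, map_C, map_linForm] at hmap
  exact (isPermanental_of_per3_eq_sum hmap).fourteen_le_card

/-- Over a field of characteristic 0, the Waring rank of `per₃` is at least 14:
it cannot be written as a linear combination of 13 (or fewer) cubes of linear forms. -/
theorem per3_not_sum_of_13_cubes (k : Type*) [Field k] [CharZero k] :
    ¬ ∃ (c : Fin 13 → k) (a : Fin 13 → (Fin 3 × Fin 3) → k),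
        per3 k = ∑ i, C (c i) * linForm (a i) ^ 3 := by
  rintro ⟨c, a, h⟩
  exact absurd (per3_not_sum_of_13_cubes_general h) (by simp)
end

section
/- Let k be a field of characteristic 0 and d ≥ 3. For every linear form ℓ ∈ k[x_{1,1},…,x_{d,d}], the form det_d − ℓ^d is concise in the d² variables x_{1,1},…,x_{d,d}; equivalently, its d² first partial derivatives are linearly independent over k, i.e. no nonzero constant-coefficient first-order differential operator annihilates det_d − ℓ^d. -/
open MvPolynomial

/-- The generic d×d determinant, a form of degree `d` in the `d²` variables `x_{i,j}`. -/
noncomputable def detd (k : Type*) [CommRing k] (d : ℕ) : MvPolynomial (Fin d × Fin d) k :=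
  Matrix.det (Matrix.of fun i j : Fin d => X (i, j))

/-!
Let `c` be a linear relation among the partial derivatives of `F - ℓ ^ m`, where `F = det` and
`ℓ = ∑ i, b i * x i`, and put `e = m * (c ⬝ᵥ b)`. Then `c ⬝ᵥ ∇F(x) = e * ℓ(x) ^ (m - 1)` at every
point `x`, and the gradient of `det` is the transposed adjugate.

At a matrix unit the adjugate vanishes, as the size is at least `3`, so `e` kills the powers
`b i ^ (m - 1)`. On the other hand the adjugates span all matrices, so `e` divides every `c i`.
Hence `e = e * s` with `s` in the ideal generated by the `b i`, which is nilpotent modulo the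
annihilator of `e`. So `e = 0`, and therefore `c = 0`.
-/

section Gradient

variable {R σ : Type*} [CommRing R]

/-- The gradient of the polynomial `F` at the point `x`: the vector of values at `x` of the formal
partial derivatives of `F`. -/
noncomputable def gradAt (F : MvPolynomial σ R) (x : σ → R) : σ → R :=
  fun i => eval x (pderiv i F)

variable [Fintype σ]

theorem gradAt_linForm_pow (b : σ → R) (m : ℕ) (x : σ → R) :
    gradAt (linForm b ^ m) x = (m * (b ⬝ᵥ x) ^ (m - 1)) • b := by
  classical
  ext i
  simp [gradAt, linForm, dotProduct, pderiv_X, Pi.single_apply, mul_assoc]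

theorem dotProduct_gradAt_of_sum_smul_pderiv_eq_zero {F : MvPolynomial σ R} {b c : σ → R} {m : ℕ}
    (hc : ∑ i, c i • pderiv i (F - linForm b ^ m) = 0) (x : σ → R) :
    c ⬝ᵥ gradAt F x = m * (c ⬝ᵥ b) * (b ⬝ᵥ x) ^ (m - 1) := by
  have hsub : c ⬝ᵥ gradAt F x - c ⬝ᵥ gradAt (linForm b ^ m) x = 0 := by
    simpa [gradAt, dotProduct, mul_sub, smul_eval] using congrArg (eval x) hc
  rw [sub_eq_zero.mp hsub, gradAt_linForm_pow, dotProduct_smul, smul_eq_mul]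
  ring

theorem dvd_of_forall_dvd_dotProduct {V : Set (σ → R)} (hV : Submodule.span R V = ⊤)
    {c : σ → R} {e : R} (h : ∀ v ∈ V, e ∣ c ⬝ᵥ v) (i : σ) : e ∣ c i := by
  classical
  have hspan : Submodule.span R V ≤ Submodule.comap (dotProductBilin R R c) (Ideal.span {e}) :=
    Submodule.span_le.mpr fun v hv => Ideal.mem_span_singleton.mpr (h v hv)
  have hi : Pi.single i 1 ∈ Submodule.span R V := hV ▸ Submodule.mem_top
  simpa [Ideal.mem_span_singleton] using hspan hi

theorem eq_zero_of_forall_dvd_of_mem_radical_annihilator {b c : σ → R} {e : R}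
    (hec : ∀ i, e ∣ c i) (hce : c ⬝ᵥ b ∣ e)
    (hb : ∀ i, b i ∈ (Submodule.span R {e}).annihilator.radical) : c = 0 := by
  choose r hr using hec
  have hcr : c = e • r := funext hr
  obtain ⟨t, ht⟩ := hce
  have he_self : e * (r ⬝ᵥ b * t) = e := by
    rw [← mul_assoc, ← smul_eq_mul e, ← smul_dotProduct, ← hcr, ← ht]
  obtain ⟨N, hN⟩ : r ⬝ᵥ b * t ∈ (Submodule.span R {e}).annihilator.radical :=
    Ideal.mul_mem_right _ _ <| Ideal.sum_mem _ fun i _ => Ideal.mul_mem_left _ _ (hb i)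
  have he_pow (k : ℕ) : e * (r ⬝ᵥ b * t) ^ k = e := by
    induction k with
    | zero => rw [pow_zero, mul_one]
    | succ k ih => rw [pow_succ, ← mul_assoc, ih, he_self]
  have he : e = 0 := by
    rw [← he_pow N, mul_comm]
    exact (Submodule.mem_annihilator_span_singleton _ _).mp hN
  rw [hcr, he, zero_smul]

theorem linearIndependent_pderiv_sub_linForm_pow [DecidableEq σ] {F : MvPolynomial σ R}
    (hspan : Submodule.span R (Set.range (gradAt F)) = ⊤)
    (hsingle : ∀ i, gradAt F (Pi.single i 1) = 0) (b : σ → R) (m : ℕ) :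
    LinearIndependent R fun i => pderiv i (F - linForm b ^ m) := by
  rw [Fintype.linearIndependent_iff]
  intro c hc
  have hgrad := dotProduct_gradAt_of_sum_smul_pderiv_eq_zero hc
  have hdvd : ∀ i, m * (c ⬝ᵥ b) ∣ c i :=
    dvd_of_forall_dvd_dotProduct hspan <| Set.forall_mem_range.mpr fun x => ⟨_, hgrad x⟩
  have hpow (i : σ) : b i ^ (m - 1) * (m * (c ⬝ᵥ b)) = 0 := by
    simpa [hsingle, mul_comm] using (hgrad (Pi.single i 1)).symm
  exact congrFun <| eq_zero_of_forall_dvd_of_mem_radical_annihilator hdvd (dvd_mul_left _ _)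
    fun i => ⟨m - 1, (Submodule.mem_annihilator_span_singleton _ _).mpr (hpow i)⟩

end Gradient

section Adjugate

variable {R n : Type*} [CommRing R] [Fintype n] [DecidableEq n]

theorem adjugate_single_eq_zero (hn : 3 ≤ Fintype.card n) (p q : n) (t : R) :
    (Matrix.single p q t).adjugate = 0 := by
  ext i j
  obtain ⟨k, -, hk⟩ : ∃ k ∈ Finset.univ, k ∉ ({j, p} : Finset n) :=
    Finset.exists_mem_notMem_of_card_lt_card (Finset.card_le_two.trans_lt hn)
  simp only [Finset.mem_insert, Finset.mem_singleton, not_or] at hk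
  rw [Matrix.adjugate_apply]
  refine Matrix.det_eq_zero_of_row_eq_zero k fun l => ?_
  rw [Matrix.updateRow_ne hk.1, Matrix.single_apply_of_row_ne (Ne.symm hk.2)]

theorem adjugate_submatrix_perm (A : Matrix n n R) (τ : Equiv.Perm n) (i j : n) :
    (A.submatrix τ id).adjugate i j = Equiv.Perm.sign τ • A.adjugate i (τ j) := by
  have hrow : (A.submatrix τ id).updateRow j (Pi.single i 1) =
      (A.updateRow (τ j) (Pi.single i 1)).submatrix τ id := by
    ext k l
    simp [Matrix.updateRow_apply]
  rw [Matrix.adjugate_apply, hrow, Matrix.det_permute, Matrix.adjugate_apply, Units.smul_def,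
    zsmul_eq_mul]

theorem adjugate_diagonal_update_one_zero (q : n) :
    (Matrix.diagonal (Function.update (1 : n → R) q 0)).adjugate = Matrix.single q q 1 := by
  rw [Matrix.adjugate_diagonal, ← Matrix.diagonal_single]
  congr 1
  ext i
  obtain rfl | hi := eq_or_ne i q
  · rw [Pi.single_eq_same]
    exact Finset.prod_eq_one fun j hj => by simp [Finset.ne_of_mem_erase hj]
  · rw [Pi.single_eq_of_ne hi]
    exact Finset.prod_eq_zero (i := q) (by simp [hi.symm]) (by simp)

theorem adjugate_diagonal_update_one_zero_submatrix (τ : Equiv.Perm n) (q : n) :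
    ((Matrix.diagonal (Function.update (1 : n → R) q 0)).submatrix τ id).adjugate =
      Equiv.Perm.sign τ • Matrix.single q (τ.symm q) 1 := by
  ext i j
  rw [adjugate_submatrix_perm, adjugate_diagonal_update_one_zero]
  simp [Matrix.single_apply, Equiv.symm_apply_eq]

theorem derivation_det_eq_zero {S A N : Type*} [CommSemiring S] [CommRing A] [Algebra S A]
    [AddCommGroup N] [Module A N] [Module S N] (D : Derivation S A N) {M : Matrix n n A}
    (hM : ∀ i j, D (M i j) = 0) : D M.det = 0 := by
  rw [Matrix.det_apply, map_sum]
  refine Finset.sum_eq_zero fun τ _ => ?_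
  have hprod : D (∏ i, M (τ i) i) = 0 :=
    Finset.prod_induction _ (D · = 0) (fun x y hx hy => by simp [hx, hy]) D.map_one_eq_zero
      fun i _ => hM (τ i) i
  rw [Units.smul_def, map_zsmul, hprod, smul_zero]

theorem pderiv_det_mvPolynomialX (i j : n) :
    pderiv (i, j) (Matrix.mvPolynomialX n n R).det = (Matrix.mvPolynomialX n n R).adjugate j i := by
  set G := Matrix.mvPolynomialX n n R
  have hadj (l : n) : pderiv (i, j) (G.adjugate l i) = 0 := by
    rw [Matrix.adjugate_apply]
    refine derivation_det_eq_zero _ fun r s => ?_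
    obtain rfl | hr := eq_or_ne r i
    · obtain rfl | hs := eq_or_ne s l <;> simp [*]
    · simp [G, hr, pderiv_X]
  simp [Matrix.det_eq_sum_mul_adjugate_row G i, hadj, G, pderiv_X, Pi.single_apply]

theorem gradAt_det_mvPolynomialX (A : Matrix n n R) (ij : n × n) :
    gradAt (Matrix.mvPolynomialX n n R).det (fun p => A p.1 p.2) ij = A.adjugate ij.2 ij.1 := by
  rw [gradAt, pderiv_det_mvPolynomialX]
  have h := (eval fun p : n × n => A p.1 p.2).map_adjugate (Matrix.mvPolynomialX n n R)
  rw [Matrix.mvPolynomialX_mapMatrix_eval] at h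
  exact congrFun (congrFun h ij.2) ij.1

theorem span_range_gradAt_det_mvPolynomialX :
    Submodule.span R (Set.range (gradAt (Matrix.mvPolynomialX n n R).det)) = ⊤ := by
  rw [eq_top_iff, ← (Pi.basisFun R (n × n)).span_eq, Submodule.span_le]
  rintro _ ⟨⟨p, q⟩, rfl⟩
  set τ := Equiv.swap p q
  set A : Matrix n n R := (Matrix.diagonal (Function.update 1 q 0)).submatrix τ id
  have hA : A.adjugate = Equiv.Perm.sign τ • Matrix.single q p 1 := by
    rw [adjugate_diagonal_update_one_zero_submatrix, Equiv.symm_swap, Equiv.swap_apply_right]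
  have hgrad : Pi.basisFun R (n × n) (p, q) = (Equiv.Perm.sign τ : ℤ) •
      gradAt (Matrix.mvPolynomialX n n R).det fun ij => A ij.1 ij.2 := by
    ext ⟨i, j⟩
    rw [Pi.smul_apply, gradAt_det_mvPolynomialX, hA, Matrix.smul_apply, Units.smul_def, smul_smul,
      Int.units_coe_mul_self, one_smul]
    simp [Matrix.single_apply, Pi.single_apply, and_comm, eq_comm]
  rw [hgrad]
  exact zsmul_mem (Submodule.subset_span (Set.mem_range_self _)) _

end Adjugate

theorem det_sub_power_concise_general {R n : Type*} [CommRing R] [Fintype n] [DecidableEq n]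
    (hn : 3 ≤ Fintype.card n) (b : n × n → R) (m : ℕ) :
    LinearIndependent R fun ij : n × n =>
      pderiv ij ((Matrix.mvPolynomialX n n R).det - linForm b ^ m) := by
  refine linearIndependent_pderiv_sub_linForm_pow span_range_gradAt_det_mvPolynomialX
    (fun p => ?_) b m
  have hsingle : (Pi.single p 1 : n × n → R) = fun ij => Matrix.single p.1 p.2 1 ij.1 ij.2 := by
    ext ij
    simp [Pi.single_apply, Matrix.single_apply, Prod.ext_iff, eq_comm]
  ext ij
  rw [hsingle, gradAt_det_mvPolynomialX, adjugate_single_eq_zero hn, Matrix.zero_apply,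
    Pi.zero_apply]

/-- For `d ≥ 3` and any linear form `ℓ` over a field of characteristic 0, the form
`det_d - ℓ^d` is concise: its `d²` first partial derivatives are linearly independent,
i.e. no nonzero constant-coefficient first-order differential operator annihilates it. -/
theorem det_sub_power_concise (k : Type*) [Field k] [CharZero k] (d : ℕ) (hd : 3 ≤ d)
    (b : Fin d × Fin d → k) :
    LinearIndependent k fun ij : Fin d × Fin d => pderiv ij (detd k d - linForm b ^ d) :=
  det_sub_power_concise_general (by simpa using hd) b d
end
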